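/- Let 0 < α ≤ 1 and 1/2 < H < 1 with α + H > 1. There exists a constant C > 0 (depending only on α and H) such that for every λ > 0 and every t > 0, ∫_0^t ∫_0^t (t-p)^{α-1} E_{α,α}(-λ (t-p)^α) (t-q)^{α-1} E_{α,α}(-λ (t-q)^α) |p-q|^{2H-2} dp dq ≤ C t^{2α+2H-2}. -/

import Mathlib

open Real intervalIntegral

/-- The two-parameter Mittag-Leffler function (real arguments),
with the convention `1/Γ = 0` at the poles of `Γ` (as in Mathlib's `Real.Gamma`). -/
noncomputable def mittagLeffler (α β x : ℝ) : ℝ :=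
  ∑' k : ℕ, x ^ k / Real.Gamma ((k : ℝ) * α + β)

/-!
The whole bound reduces to `0 ≤ E_{α,β}(-x) ≤ 1 / Γ(β)` for `0 < α ≤ 1`, `α ≤ β` and `0 ≤ x`. The
function `y(s) = s ^ (α - 1) * E_{α,α}(-s ^ α)` solves the Abel equation
`Γ(α) y(t) + ∫ s in 0..t, (t - s) ^ (α - 1) y(s) = t ^ (α - 1)`. If `b` were its first zero,
comparing the equation at `t < b` with the equation at `b` would give a homogeneous Gronwall
inequality on some `[a, b]` and force `y(a) ≤ 0`; hence `E_{α,α}(-x) > 0`. Fractional integration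
carries the sign to every `β ≥ α`, and the recurrence `E_{α,β}(-x) = 1 / Γ(β) - x E_{α,α+β}(-x)`
turns the sign into the upper bound.

After this, uniformly in `λ`, only the double integral of
`u ^ (β - 1) * v ^ (β - 1) * |u - v| ^ (2 * H - 2)` over a square remains. By symmetry it is twice
the integral over the triangle `u < v`, where the integral in `u` is a Beta integral.
-/

open MeasureTheory Set Filter Topology
open ProbabilityTheory (beta beta_pos beta_eq_betaIntegralReal)

lemma rpow_mul_exp_neg_le_Gamma {R x : ℝ} (hR : 0 ≤ R) (hx : 1 ≤ x) :
    R ^ (x - 1) * exp (-R) ≤ Gamma x := by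
  have hint := GammaIntegral_convergent (zero_lt_one.trans_le hx)
  calc R ^ (x - 1) * exp (-R) = ∫ s in Ioi R, exp (-s) * R ^ (x - 1) := by
        rw [MeasureTheory.integral_mul_const, integral_exp_neg_Ioi, mul_comm]
    _ ≤ ∫ s in Ioi R, exp (-s) * s ^ (x - 1) := by
        refine setIntegral_mono_on ((integrableOn_exp_neg_Ioi R).mul_const _)
          (hint.mono_set (Ioi_subset_Ioi hR)) measurableSet_Ioi fun s hs ↦ ?_
        gcongr
        exact (mem_Ioi.1 hs).le
    _ ≤ ∫ s in Ioi 0, exp (-s) * s ^ (x - 1) := by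
        refine setIntegral_mono_set hint ?_ (Ioi_subset_Ioi hR).eventuallyLE
        filter_upwards [ae_restrict_mem measurableSet_Ioi] with s hs
        have : 0 < s := hs
        simp only [Pi.zero_apply]
        positivity
    _ = Gamma x := (Gamma_eq_integral (by linarith)).symm

section MittagLeffler

variable {α : ℝ}

/- The lower bound for `Γ` is used with `R` chosen so that `R ^ α = 2 (|x| + 1)`, which makes the
series geometric with ratio at most `1 / 2`. -/
lemma summable_mittagLeffler (hα : 0 < α) (β x : ℝ) :
    Summable fun k : ℕ ↦ x ^ k / Gamma (k * α + β) := by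
  set A : ℝ := 2 * (|x| + 1) with hA
  set R : ℝ := A ^ α⁻¹
  have hApos : 0 < A := by positivity
  have hRpos : 0 < R := by positivity
  have hRA (k : ℕ) : R ^ (k * α + β - 1) = A ^ k * R ^ (β - 1) := by
    rw [← rpow_inv_rpow hApos.le hα.ne', ← rpow_natCast, ← rpow_mul hRpos.le, ← rpow_add hRpos]
    ring_nf
  have hgeom : Summable fun k : ℕ ↦ (1 / 2 : ℝ) ^ k / (R ^ (β - 1) * exp (-R)) :=
    summable_geometric_two.div_const _
  refine .of_norm_bounded_eventually_nat hgeom ?_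
  have hlarge : ∀ᶠ k : ℕ in atTop, (1 - β) / α ≤ k :=
    tendsto_natCast_atTop_atTop.eventually_ge_atTop _
  filter_upwards [hlarge] with k hk
  have hk1 : 1 ≤ k * α + β := by rw [div_le_iff₀ hα] at hk; linarith
  have hG : A ^ k * (R ^ (β - 1) * exp (-R)) ≤ Gamma (k * α + β) := by
    rw [← mul_assoc, ← hRA]
    exact rpow_mul_exp_neg_le_Gamma hRpos.le hk1
  have hratio : |x| / A ≤ 1 / 2 := by
    rw [div_le_iff₀ hApos, hA]
    linarith
  calc ‖x ^ k / Gamma (k * α + β)‖ = |x| ^ k / Gamma (k * α + β) := by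
        rw [norm_div, norm_pow, norm_eq_abs, norm_of_nonneg (Gamma_nonneg_of_nonneg (by linarith))]
    _ ≤ |x| ^ k / (A ^ k * (R ^ (β - 1) * exp (-R))) := by gcongr
    _ = (|x| / A) ^ k / (R ^ (β - 1) * exp (-R)) := by rw [div_pow, div_div]
    _ ≤ (1 / 2) ^ k / (R ^ (β - 1) * exp (-R)) := by gcongr

lemma continuous_mittagLeffler (hα : 0 < α) (β : ℝ) : Continuous (mittagLeffler α β) := by
  refine continuous_iff_continuousAt.2 fun x ↦ ?_
  have hx : Metric.closedBall (0 : ℝ) (|x| + 1) ∈ 𝓝 x :=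
    Metric.closedBall_mem_nhds_of_mem (by simp)
  refine ContinuousOn.continuousAt ?_ hx
  refine continuousOn_tsum (fun k ↦ by fun_prop) (summable_mittagLeffler hα β (|x| + 1)).norm
    fun k y hy ↦ ?_
  rw [mem_closedBall_zero_iff] at hy
  rw [norm_div, norm_div, norm_pow, norm_pow]
  gcongr
  exact hy.trans (le_abs_self _)

lemma mittagLeffler_zero (α β : ℝ) : mittagLeffler α β 0 = 1 / Gamma β := by
  rw [mittagLeffler, tsum_eq_single 0 fun k hk ↦ by simp [hk]]
  simp

lemma mittagLeffler_eq_add (hα : 0 < α) (β x : ℝ) :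
    mittagLeffler α β x = 1 / Gamma β + x * mittagLeffler α (α + β) x := by
  rw [mittagLeffler, (summable_mittagLeffler hα β x).tsum_eq_zero_add, mittagLeffler,
    ← tsum_mul_left]
  congr 1
  · simp
  · refine tsum_congr fun k ↦ ?_
    rw [pow_succ', mul_div_assoc]
    push_cast
    ring_nf

end MittagLeffler

section Beta

variable {a b t : ℝ}

lemma integral_rpow_mul_sub_rpow (ha : 0 < a) (hb : 0 < b) (ht : 0 < t) :
    ∫ s in (0 : ℝ)..t, s ^ (a - 1) * (t - s) ^ (b - 1) = t ^ (a + b - 1) * beta a b := by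
  have h := congrArg Complex.re (Complex.betaIntegral_scaled a b ht)
  have hpow : (t : ℂ) ^ ((a : ℂ) + b - 1) = ((t ^ (a + b - 1) : ℝ) : ℂ) := by
    rw [Complex.ofReal_cpow ht.le]
    push_cast
    rfl
  rw [hpow, Complex.re_ofReal_mul, ← beta_eq_betaIntegralReal a b ha hb] at h
  rw [← h, ← Complex.ofReal_re (∫ s in (0 : ℝ)..t, _), ← intervalIntegral.integral_ofReal]
  congr 1
  refine intervalIntegral.integral_congr fun s hs ↦ ?_
  rw [uIcc_of_le ht.le] at hs
  simp only [Complex.ofReal_mul, Complex.ofReal_cpow hs.1, Complex.ofReal_cpow (sub_nonneg.2 hs.2),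
    Complex.ofReal_sub, Complex.ofReal_one]

lemma intervalIntegrable_rpow_mul_sub_rpow (ha : 0 < a) (hb : 0 < b) (ht : 0 < t) :
    IntervalIntegrable (fun s : ℝ ↦ s ^ (a - 1) * (t - s) ^ (b - 1)) volume 0 t := by
  refine intervalIntegral.intervalIntegrable_of_integral_ne_zero ?_
  rw [integral_rpow_mul_sub_rpow ha hb ht]
  exact (mul_pos (by positivity) (beta_pos ha hb)).ne'

end Beta

section FractionalIntegral

variable {α β γ t : ℝ}

lemma pow_div_Gamma_mul_integral_rpow_mul_sub_rpow (hα : 0 ≤ α) (hβ : 0 < β) (hγ : 0 < γ)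
    (ht : 0 < t) (x : ℝ) (k : ℕ) :
    x ^ k / Gamma (k * α + β) * ∫ s in (0 : ℝ)..t, s ^ (k * α + β - 1) * (t - s) ^ (γ - 1) =
      Gamma γ * t ^ (β + γ - 1) * ((x * t ^ α) ^ k / Gamma (k * α + (β + γ))) := by
  have hpos : 0 < k * α + β := by positivity
  have hΓ := (Gamma_pos_of_pos hpos).ne'
  have hpow : t ^ (k * α + β + γ - 1) = t ^ (β + γ - 1) * (t ^ α) ^ k := by
    rw [← rpow_natCast, ← rpow_mul ht.le, ← rpow_add ht]
    ring_nf
  rw [integral_rpow_mul_sub_rpow hpos hγ ht, beta, hpow, mul_pow, ← add_assoc]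
  field_simp

lemma tsum_mul_rpow_eq_mittagLeffler_mul_rpow {s : ℝ} (hs : 0 < s) (x : ℝ) :
    ∑' k : ℕ, x ^ k / Gamma (k * α + β) * s ^ (k * α + β - 1) =
      mittagLeffler α β (x * s ^ α) * s ^ (β - 1) := by
  rw [mittagLeffler, ← tsum_mul_right]
  refine tsum_congr fun k ↦ ?_
  have hpow : s ^ (k * α + β - 1) = (s ^ α) ^ k * s ^ (β - 1) := by
    rw [← rpow_natCast, ← rpow_mul hs.le, ← rpow_add hs]
    ring_nf
  rw [hpow, mul_pow]
  ring

lemma integral_mittagLeffler_mul_rpow (hα : 0 < α) (hβ : 0 < β) (hγ : 0 < γ)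
    (ht : 0 < t) (x : ℝ) :
    ∫ s in (0 : ℝ)..t, mittagLeffler α β (x * s ^ α) * (s ^ (β - 1) * (t - s) ^ (γ - 1)) =
      Gamma γ * t ^ (β + γ - 1) * mittagLeffler α (β + γ) (x * t ^ α) := by
  have hpos (k : ℕ) : 0 < k * α + β := by positivity
  set f : ℕ → ℝ → ℝ := fun k s ↦
    x ^ k / Gamma (k * α + β) * (s ^ (k * α + β - 1) * (t - s) ^ (γ - 1)) with hf
  have hterm (y : ℝ) (k : ℕ) :=
    pow_div_Gamma_mul_integral_rpow_mul_sub_rpow hα.le hβ hγ ht y k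
  have hint (k : ℕ) : IntegrableOn (f k) (Ioc 0 t) :=
    ((intervalIntegrable_rpow_mul_sub_rpow (hpos k) hγ ht).const_mul _).1
  have hnorm (k : ℕ) : ∫ s in Ioc 0 t, ‖f k s‖ =
      Gamma γ * t ^ (β + γ - 1) * ((|x| * t ^ α) ^ k / Gamma (k * α + (β + γ))) := by
    rw [← hterm, ← intervalIntegral.integral_const_mul, intervalIntegral.integral_of_le ht.le]
    refine setIntegral_congr_fun measurableSet_Ioc fun s hs ↦ ?_
    have hs0 : 0 ≤ s := hs.1.le
    have hst : 0 ≤ t - s := sub_nonneg.2 hs.2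
    simp only [hf]
    rw [norm_mul, norm_div, norm_pow, norm_eq_abs, norm_of_nonneg (Gamma_pos_of_pos (hpos k)).le,
      norm_of_nonneg (by positivity)]
  have hsummable : Summable fun k ↦ ∫ s in Ioc 0 t, ‖f k s‖ := by
    simp_rw [hnorm]
    exact (summable_mittagLeffler hα (β + γ) _).mul_left _
  have hseries : ∀ s ∈ Ioc 0 t, ∑' k, f k s =
      mittagLeffler α β (x * s ^ α) * (s ^ (β - 1) * (t - s) ^ (γ - 1)) := by
    intro s hs
    simp only [hf, ← mul_assoc]
    rw [tsum_mul_right, tsum_mul_rpow_eq_mittagLeffler_mul_rpow hs.1]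
  rw [intervalIntegral.integral_of_le ht.le, ← setIntegral_congr_fun measurableSet_Ioc hseries,
    ← integral_tsum_of_summable_integral_norm hint hsummable, mittagLeffler, ← tsum_mul_left]
  refine tsum_congr fun k ↦ ?_
  rw [← hterm, ← intervalIntegral.integral_const_mul, intervalIntegral.integral_of_le ht.le]

end FractionalIntegral

lemma exists_integral_lt_of_intervalIntegrable {w : ℝ → ℝ} {a b ε : ℝ} (hab : a < b)
    (hw : IntervalIntegrable w volume a b) (hε : 0 < ε) :
    ∃ c ∈ Ioo a b, ∫ s in c..b, w s < ε := by
  have hcont := continuousOn_primitive_interval_left ((intervalIntegrable_iff' (f := w)).1 hw)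
  have hlim : Tendsto (fun c ↦ ∫ s in c..b, w s) (𝓝[Ioo a b] b) (𝓝 0) := by
    have := (hcont b right_mem_uIcc).mono (Ioo_subset_Icc_self.trans Icc_subset_uIcc)
    simpa [ContinuousWithinAt] using this
  have : (𝓝[Ioo a b] b).NeBot := right_nhdsWithin_Ioo_neBot hab
  obtain ⟨c, hcε, hc⟩ := ((hlim.eventually_lt_const hε).and self_mem_nhdsWithin).exists
  exact ⟨c, hc, hcε⟩

/- A maximum point `m` with `f m > 0` would give `f m ≤ f m * ∫ s in m..b, w s < f m`. -/
lemma nonpos_of_le_integral_mul {f w : ℝ → ℝ} {a b : ℝ} (hf : ContinuousOn f (Icc a b))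
    (hw : IntervalIntegrable w volume a b) (hw_nonneg : ∀ s ∈ Icc a b, 0 ≤ w s)
    (hw_lt : ∫ s in a..b, w s < 1) (hle : ∀ t ∈ Icc a b, f t ≤ ∫ s in t..b, f s * w s) :
    ∀ t ∈ Icc a b, f t ≤ 0 := by
  intro t ht
  obtain ⟨m, hm, hmax⟩ := isCompact_Icc.exists_isMaxOn ⟨t, ht⟩ hf
  refine (hmax ht).trans (not_lt.1 fun hpos ↦ ?_)
  have hab : a ≤ b := hm.1.trans hm.2
  have hsub : Icc m b ⊆ Icc a b := Icc_subset_Icc_left hm.1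
  have hwm : IntervalIntegrable w volume m b :=
    hw.mono_set (by rwa [uIcc_of_le hm.2, uIcc_of_le hab])
  have htail : ∫ s in m..b, w s ≤ ∫ s in a..b, w s := by
    refine intervalIntegral.integral_mono_interval hm.1 hm.2 le_rfl ?_ hw
    filter_upwards [ae_restrict_mem measurableSet_Ioc] with s hs
    exact hw_nonneg s (Ioc_subset_Icc_self hs)
  have : f m < f m := calc
    f m ≤ ∫ s in m..b, f s * w s := hle m hm
    _ ≤ ∫ s in m..b, f m * w s := by
        refine intervalIntegral.integral_mono_on hm.2
          (hwm.continuousOn_mul (hf.mono (by rwa [uIcc_of_le hm.2]))) (hwm.const_mul _)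
          fun s hs ↦ ?_
        exact mul_le_mul_of_nonneg_right (hmax (hsub hs)) (hw_nonneg s (hsub hs))
    _ = f m * ∫ s in m..b, w s := intervalIntegral.integral_const_mul _ _
    _ < f m * 1 := by gcongr; exact htail.trans_lt hw_lt
    _ = f m := mul_one _
  exact this.false

lemma exists_first_nonpos {f : ℝ → ℝ} {a x : ℝ} (hf : ContinuousOn f (Icc a x)) (hax : a ≤ x)
    (ha : 0 < f a) (hx : f x ≤ 0) : ∃ b ∈ Ioc a x, f b ≤ 0 ∧ ∀ s ∈ Ico a b, 0 < f s := by
  have hcompact : IsCompact (Icc a x ∩ f ⁻¹' Iic 0) :=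
    isCompact_Icc.of_isClosed_subset (hf.preimage_isClosed_of_isClosed isClosed_Icc isClosed_Iic)
      inter_subset_left
  obtain ⟨b, ⟨hb, hfb⟩, hleast⟩ := hcompact.exists_isLeast ⟨x, right_mem_Icc.2 hax, hx⟩
  refine ⟨b, ⟨hb.1.lt_of_ne ?_, hb.2⟩, hfb, fun s hs ↦ not_le.1 fun hfs ↦ ?_⟩
  · rintro rfl
    exact (ha.trans_le hfb).false
  · exact (hs.2.trans_le (hleast ⟨⟨hs.1, hs.2.le.trans hb.2⟩, hfs⟩)).false

section AbelEquation

/-- The Abel integral equation of the second kind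
`c * y t + ∫ s in 0..t, (t - s) ^ (α - 1) * y s = t ^ (α - 1)`, written for the factor `F` of
`y s = s ^ (α - 1) * F s`, which, unlike `y`, is continuous at `0`. -/
def SolvesAbelEquation (α c : ℝ) (F : ℝ → ℝ) : Prop :=
  ∀ t, 0 < t → c * (t ^ (α - 1) * F t) +
    ∫ s in (0 : ℝ)..t, F s * (s ^ (α - 1) * (t - s) ^ (α - 1)) = t ^ (α - 1)

variable {α c : ℝ} {F : ℝ → ℝ}

lemma div_rpow_mul_rpow_sub_le (hα : α ≤ 1) {s t b : ℝ} (hs : 0 ≤ s) (hst : s < t) (htb : t ≤ b) :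
    (t / b) ^ (α - 1) * (b - s) ^ (α - 1) ≤ (t - s) ^ (α - 1) := by
  have hb : 0 < b := hs.trans_lt (hst.trans_le htb)
  have ht : 0 < t := hs.trans_lt hst
  rw [← mul_rpow (by positivity) (by linarith)]
  refine rpow_le_rpow_of_nonpos (sub_pos.2 hst) ?_ (by linarith)
  rw [div_mul_eq_mul_div, le_div_iff₀ hb]
  nlinarith

lemma div_rpow_mul_integral_mul_rpow_sub_le (hα : 0 < α) (hα1 : α ≤ 1) (hcont : Continuous F)
    {t b : ℝ} (ht : 0 < t) (htb : t ≤ b) (hnonneg : ∀ s ∈ Ioo 0 t, 0 ≤ F s) :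
    (t / b) ^ (α - 1) * ∫ s in (0 : ℝ)..t, F s * (s ^ (α - 1) * (b - s) ^ (α - 1)) ≤
      ∫ s in (0 : ℝ)..t, F s * (s ^ (α - 1) * (t - s) ^ (α - 1)) := by
  have hint (x : ℝ) (hx : 0 < x) : IntervalIntegrable
      (fun s ↦ F s * (s ^ (α - 1) * (x - s) ^ (α - 1))) volume 0 x :=
    (intervalIntegrable_rpow_mul_sub_rpow hα hα hx).continuousOn_mul hcont.continuousOn
  have hb := ht.trans_le htb
  have hint_b := (hint b hb).mono_set
    (uIcc_subset_uIcc_left (Icc_subset_uIcc ⟨ht.le, htb⟩))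
  rw [← intervalIntegral.integral_const_mul]
  refine intervalIntegral.integral_mono_on_of_le_Ioo ht.le (hint_b.const_mul _) (hint t ht)
    fun s hs ↦ ?_
  have hFs : 0 ≤ F s * s ^ (α - 1) := mul_nonneg (hnonneg s hs) (rpow_nonneg hs.1.le _)
  calc (t / b) ^ (α - 1) * (F s * (s ^ (α - 1) * (b - s) ^ (α - 1)))
      = F s * s ^ (α - 1) * ((t / b) ^ (α - 1) * (b - s) ^ (α - 1)) := by ring
    _ ≤ F s * s ^ (α - 1) * (t - s) ^ (α - 1) := by
        gcongr
        exact div_rpow_mul_rpow_sub_le hα1 hs.1.le hs.2 htb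
    _ = F s * (s ^ (α - 1) * (t - s) ^ (α - 1)) := mul_assoc _ _ _

/- Since `(t / b) ^ (α - 1) * (b - s) ^ (α - 1) ≤ (t - s) ^ (α - 1)`, the equation at `t` is
controlled from below by the equation at `b`, up to the part of the integral over `[t, b]`. -/
lemma SolvesAbelEquation.le_integral (hF : SolvesAbelEquation α c F) (hα : 0 < α) (hα1 : α ≤ 1)
    (hc : 0 < c) (hcont : Continuous F) {b t : ℝ} (ht : 0 < t) (htb : t ≤ b)
    (hnonneg : ∀ s ∈ Ico 0 b, 0 ≤ F s) (hb : F b ≤ 0) :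
    F t ≤ ∫ s in t..b, F s * (b ^ (1 - α) / c * (s ^ (α - 1) * (b - s) ^ (α - 1))) := by
  have hb0 : 0 < b := ht.trans_le htb
  have hint : IntervalIntegrable (fun s ↦ F s * (s ^ (α - 1) * (b - s) ^ (α - 1))) volume 0 b :=
    (intervalIntegrable_rpow_mul_sub_rpow hα hα hb0).continuousOn_mul hcont.continuousOn
  have ht_mem : t ∈ uIcc 0 b := Icc_subset_uIcc ⟨ht.le, htb⟩
  set J := ∫ s in t..b, F s * (s ^ (α - 1) * (b - s) ^ (α - 1)) with hJ
  have hb_eq : b ^ (α - 1) - J ≤ ∫ s in (0 : ℝ)..t, F s * (s ^ (α - 1) * (b - s) ^ (α - 1)) := by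
    have hsplit := intervalIntegral.integral_add_adjacent_intervals
      (hint.mono_set (uIcc_subset_uIcc_left ht_mem))
      (hint.mono_set (uIcc_subset_uIcc_right ht_mem))
    have hFb : c * (b ^ (α - 1) * F b) ≤ 0 :=
      mul_nonpos_of_nonneg_of_nonpos hc.le (mul_nonpos_of_nonneg_of_nonpos (by positivity) hb)
    linarith [hF b hb0]
  have hcompare := div_rpow_mul_integral_mul_rpow_sub_le hα hα1 hcont ht htb
    fun s hs ↦ hnonneg s ⟨hs.1.le, hs.2.trans_le htb⟩
  have hratio : (t / b) ^ (α - 1) = t ^ (α - 1) * b ^ (1 - α) := by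
    rw [div_rpow ht.le hb0.le, div_eq_mul_inv, ← rpow_neg hb0.le, neg_sub]
  have hcancel : b ^ (1 - α) * b ^ (α - 1) = 1 := by
    rw [← rpow_add hb0, sub_add_sub_cancel', sub_self, rpow_zero]
  have hmain : t ^ (α - 1) * (c * F t) ≤ t ^ (α - 1) * (b ^ (1 - α) * J) := calc
    t ^ (α - 1) * (c * F t)
      = t ^ (α - 1) - ∫ s in (0 : ℝ)..t, F s * (s ^ (α - 1) * (t - s) ^ (α - 1)) := by
        linarith [hF t ht]
    _ ≤ t ^ (α - 1) - (t / b) ^ (α - 1) * (b ^ (α - 1) - J) := by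
        gcongr
        exact (mul_le_mul_of_nonneg_left hb_eq (by positivity)).trans hcompare
    _ = t ^ (α - 1) * (1 - b ^ (1 - α) * b ^ (α - 1) + b ^ (1 - α) * J) := by rw [hratio]; ring
    _ = t ^ (α - 1) * (b ^ (1 - α) * J) := by rw [hcancel, sub_self, zero_add]
  have hJ_eq : ∫ s in t..b, F s * (b ^ (1 - α) / c * (s ^ (α - 1) * (b - s) ^ (α - 1))) =
      b ^ (1 - α) * J / c := by
    rw [hJ, mul_div_right_comm, ← intervalIntegral.integral_const_mul]
    simp only [mul_left_comm]
  rw [hJ_eq, le_div_iff₀' hc]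
  exact le_of_mul_le_mul_left hmain (by positivity)

/- Just before its first zero, `F` satisfies a homogeneous Gronwall inequality, so it would already
vanish there. -/
theorem SolvesAbelEquation.pos (hF : SolvesAbelEquation α c F) (hα : 0 < α) (hα1 : α ≤ 1)
    (hc : 0 < c) (hcont : Continuous F) (hzero : 0 < F 0) {x : ℝ} (hx : 0 ≤ x) : 0 < F x := by
  by_contra! hFx
  obtain ⟨b, hb, hFb, hpos⟩ := exists_first_nonpos hcont.continuousOn hx hzero hFx
  set w : ℝ → ℝ := fun s ↦ b ^ (1 - α) / c * (s ^ (α - 1) * (b - s) ^ (α - 1))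
  have hw : IntervalIntegrable w volume 0 b :=
    (intervalIntegrable_rpow_mul_sub_rpow hα hα hb.1).const_mul _
  obtain ⟨a, ha, hw_lt⟩ := exists_integral_lt_of_intervalIntegrable hb.1 hw one_pos
  have hFa : F a ≤ 0 := by
    refine nonpos_of_le_integral_mul hcont.continuousOn (hw.mono_set ?_) (fun s hs ↦ ?_) hw_lt
      (fun t ht ↦ hF.le_integral hα hα1 hc hcont (ha.1.trans_le ht.1) ht.2
        (fun s hs ↦ (hpos s hs).le) hFb) a (left_mem_Icc.2 ha.2.le)
    · exact uIcc_subset_uIcc_right (Icc_subset_uIcc (Ioo_subset_Icc_self ha))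
    · have hs0 : 0 ≤ s := ha.1.le.trans hs.1
      have hsb : 0 ≤ b - s := sub_nonneg.2 hs.2
      have hb0 := hb.1
      positivity
  exact (hpos a ⟨ha.1.le, ha.2⟩).not_ge hFa

end AbelEquation

section MittagLefflerNeg

variable {α β x : ℝ}

lemma solvesAbelEquation_mittagLeffler (hα : 0 < α) :
    SolvesAbelEquation α (Gamma α) fun s ↦ mittagLeffler α α (-1 * s ^ α) := by
  intro t ht
  have hpow : t ^ (α + α - 1) = t ^ (α - 1) * t ^ α := by rw [← rpow_add ht]; ring_nf
  have hΓ := (Gamma_pos_of_pos hα).ne'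
  simp only
  rw [integral_mittagLeffler_mul_rpow hα hα hα ht, mittagLeffler_eq_add hα α, hpow]
  field_simp
  ring

lemma mittagLeffler_self_neg_pos (hα : 0 < α) (hα1 : α ≤ 1) (hx : 0 ≤ x) :
    0 < mittagLeffler α α (-x) := by
  have hcont : Continuous fun s : ℝ ↦ mittagLeffler α α (-1 * s ^ α) :=
    (continuous_mittagLeffler hα α).comp ((continuous_rpow_const hα.le).const_mul (-1))
  have hzero : 0 < mittagLeffler α α (-1 * 0 ^ α) := by
    rw [zero_rpow hα.ne', mul_zero, mittagLeffler_zero]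
    exact one_div_pos.2 (Gamma_pos_of_pos hα)
  have hpos := (solvesAbelEquation_mittagLeffler hα).pos hα hα1 (Gamma_pos_of_pos hα) hcont hzero
    (rpow_nonneg hx α⁻¹)
  simpa only [neg_one_mul, rpow_inv_rpow hx hα.ne'] using hpos

lemma mittagLeffler_neg_nonneg (hα : 0 < α) (hα1 : α ≤ 1) (hβ : α ≤ β) (hx : 0 ≤ x) :
    0 ≤ mittagLeffler α β (-x) := by
  rcases hβ.eq_or_lt with rfl | hαβ
  · exact (mittagLeffler_self_neg_pos hα hα1 hx).le
  · have hγ : 0 < β - α := sub_pos.2 hαβ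
    have hintegral := integral_mittagLeffler_mul_rpow hα hα hγ one_pos (-x)
    rw [one_rpow, one_rpow, mul_one, mul_one, add_sub_cancel] at hintegral
    refine nonneg_of_mul_nonneg_right ?_ (Gamma_pos_of_pos hγ)
    rw [← hintegral]
    refine intervalIntegral.integral_nonneg zero_le_one fun s hs ↦ ?_
    have hs0 : 0 ≤ s := hs.1
    have hs1 : 0 ≤ 1 - s := sub_nonneg.2 hs.2
    have hE := mittagLeffler_self_neg_pos hα hα1 (mul_nonneg hx (rpow_nonneg hs0 α))
    rw [neg_mul]
    positivity

lemma mittagLeffler_neg_le (hα : 0 < α) (hα1 : α ≤ 1) (hβ : 0 ≤ β) (hx : 0 ≤ x) :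
    mittagLeffler α β (-x) ≤ 1 / Gamma β := by
  have hnonneg := mittagLeffler_neg_nonneg hα hα1 (le_add_of_nonneg_right hβ) hx
  rw [mittagLeffler_eq_add hα β, neg_mul]
  exact sub_le_self _ (mul_nonneg hx hnonneg)

lemma abs_mittagLeffler_neg_le (hα : 0 < α) (hα1 : α ≤ 1) (hβ : α ≤ β) (hx : 0 ≤ x) :
    |mittagLeffler α β (-x)| ≤ 1 / Gamma β := by
  rw [abs_of_nonneg (mittagLeffler_neg_nonneg hα hα1 hβ hx)]
  exact mittagLeffler_neg_le hα hα1 (hα.le.trans hβ) hx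

end MittagLefflerNeg

lemma ae_prod_fst_ne_snd {X : Type*} [MeasurableSpace X] [MeasurableEq X] (μ ν : Measure X)
    [SFinite ν] [NullSingletonClass ν] : ∀ᵐ z ∂μ.prod ν, z.1 ≠ z.2 := by
  have hnull := (Measure.measure_prod_null (μ := μ) (ν := ν)
    (measurableSet_diagonal (α := X))).2 <| .of_forall fun x ↦ by
      have : Prod.mk x ⁻¹' diagonal X = {x} := by ext; simp [eq_comm]
      simp [this]
  exact measure_mono_null (fun z hz ↦ not_not.1 hz) hnull

section Symmetric

variable {X E : Type*} [MeasurableSpace X] [NormedAddCommGroup E] {μ : Measure X} [SFinite μ]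
  {f : X × X → E} {s : Set (X × X)}

lemma integrableOn_swap_preimage_of_symm (hf : ∀ z, f z.swap = f z)
    (hint : IntegrableOn f s (μ.prod μ)) : IntegrableOn f (Prod.swap ⁻¹' s) (μ.prod μ) := by
  have hswap := Measure.measurePreserving_swap.integrableOn_comp_preimage
    MeasurableEquiv.prodComm.measurableEmbedding |>.2 hint
  rwa [show f ∘ Prod.swap = f from funext hf] at hswap

lemma setIntegral_swap_preimage_of_symm [NormedSpace ℝ E] (hf : ∀ z, f z.swap = f z) :
    ∫ z in Prod.swap ⁻¹' s, f z ∂μ.prod μ = ∫ z in s, f z ∂μ.prod μ := by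
  have hswap := Measure.measurePreserving_swap.setIntegral_preimage_emb (μ := μ.prod μ)
    MeasurableEquiv.prodComm.measurableEmbedding f s
  simpa only [hf] using hswap

end Symmetric

section Triangle

variable {X E : Type*} [LinearOrder X] [TopologicalSpace X] [OrderClosedTopology X]
  [SecondCountableTopology X] [MeasurableSpace X] [OpensMeasurableSpace X]
  [NormedAddCommGroup E] {μ : Measure X} [SFinite μ] [NullSingletonClass μ] {f : X × X → E}

variable (μ) in
lemma restrict_fst_lt_snd_union_snd_lt_fst :
    (μ.prod μ).restrict ({z | z.1 < z.2} ∪ {z | z.2 < z.1}) = μ.prod μ := by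
  refine Measure.restrict_eq_self_of_ae_mem ?_
  filter_upwards [ae_prod_fst_ne_snd μ μ] with z hz using hz.lt_or_gt

lemma integrable_prod_of_integrableOn_fst_lt_snd (hf : ∀ z, f z.swap = f z)
    (hint : IntegrableOn f {z | z.1 < z.2} (μ.prod μ)) : Integrable f (μ.prod μ) := by
  rw [← restrict_fst_lt_snd_union_snd_lt_fst μ]
  exact hint.union (integrableOn_swap_preimage_of_symm hf hint)

lemma integral_prod_eq_two_nsmul_fst_lt_snd [NormedSpace ℝ E] (hf : ∀ z, f z.swap = f z)
    (hint : IntegrableOn f {z | z.1 < z.2} (μ.prod μ)) :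
    ∫ z, f z ∂μ.prod μ = 2 • ∫ z in {z | z.1 < z.2}, f z ∂μ.prod μ := by
  have hdisj : Disjoint {z : X × X | z.1 < z.2} {z | z.2 < z.1} :=
    Set.disjoint_left.2 fun z h h' ↦ lt_asymm h h'
  calc ∫ z, f z ∂μ.prod μ
      = ∫ z in {z | z.1 < z.2} ∪ {z | z.2 < z.1}, f z ∂μ.prod μ := by
        rw [restrict_fst_lt_snd_union_snd_lt_fst]
    _ = ∫ z in {z | z.1 < z.2}, f z ∂μ.prod μ + ∫ z in {z | z.2 < z.1}, f z ∂μ.prod μ :=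
        setIntegral_union hdisj (measurableSet_lt measurable_snd measurable_fst) hint
          (integrableOn_swap_preimage_of_symm hf hint)
    _ = 2 • ∫ z in {z | z.1 < z.2}, f z ∂μ.prod μ := by
        rw [two_nsmul]
        exact congrArg _ (setIntegral_swap_preimage_of_symm (s := {z | z.1 < z.2}) hf)

end Triangle

lemma restrict_Ioc_restrict_Iio {X : Type*} [LinearOrder X] [TopologicalSpace X]
    [OrderClosedTopology X] [MeasurableSpace X] [OpensMeasurableSpace X] (μ : Measure X)
    (a : X) {v t : X} (hv : v ≤ t) :
    (μ.restrict (Ioc a t)).restrict (Iio v) = μ.restrict (Ioo a v) := by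
  rw [Measure.restrict_restrict measurableSet_Iio]
  congr 1
  ext u
  simp only [mem_inter_iff, mem_Iio, mem_Ioc, mem_Ioo]
  exact ⟨fun h ↦ ⟨h.2.1, h.1⟩, fun h ↦ ⟨h.2, h.1, h.2.le.trans hv⟩⟩

section WeightedRieszKernel

/-- The Riesz kernel `|u - v| ^ (b - 1)` on the line, weighted by `u ^ (a - 1) * v ^ (a - 1)`, as a
function of the pair `z = (u, v)`. -/
noncomputable def weightedRieszKernel (a b : ℝ) (z : ℝ × ℝ) : ℝ :=
  z.1 ^ (a - 1) * z.2 ^ (a - 1) * |z.1 - z.2| ^ (b - 1)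

variable {a b t v : ℝ}

lemma weightedRieszKernel_swap (a b : ℝ) (z : ℝ × ℝ) :
    weightedRieszKernel a b z.swap = weightedRieszKernel a b z := by
  simp only [weightedRieszKernel, Prod.fst_swap, Prod.snd_swap, abs_sub_comm z.2,
    mul_comm (z.2 ^ (a - 1))]

lemma weightedRieszKernel_of_lt {u : ℝ} (huv : u < v) :
    weightedRieszKernel a b (u, v) = v ^ (a - 1) * (u ^ (a - 1) * (v - u) ^ (b - 1)) := by
  rw [weightedRieszKernel, abs_sub_comm, abs_of_pos (sub_pos.2 huv)]
  ring

lemma weightedRieszKernel_nonneg {z : ℝ × ℝ} (hz₁ : 0 ≤ z.1) (hz₂ : 0 ≤ z.2) :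
    0 ≤ weightedRieszKernel a b z := by
  unfold weightedRieszKernel
  positivity

lemma measurable_weightedRieszKernel (a b : ℝ) : Measurable (weightedRieszKernel a b) := by
  unfold weightedRieszKernel
  fun_prop

lemma integrableOn_Ioo_weightedRieszKernel (ha : 0 < a) (hb : 0 < b) (hv : 0 < v) :
    IntegrableOn (fun u ↦ weightedRieszKernel a b (u, v)) (Ioo 0 v) := by
  have hint : IntegrableOn (fun u ↦ v ^ (a - 1) * (u ^ (a - 1) * (v - u) ^ (b - 1))) (Ioo 0 v) :=
    ((intervalIntegrable_iff_integrableOn_Ioo_of_le hv.le).1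
      (intervalIntegrable_rpow_mul_sub_rpow ha hb hv)).const_mul _
  exact hint.congr_fun (fun u hu ↦ (weightedRieszKernel_of_lt hu.2).symm) measurableSet_Ioo

lemma integral_Ioo_weightedRieszKernel (ha : 0 < a) (hb : 0 < b) (hv : 0 < v) :
    ∫ u in Ioo 0 v, weightedRieszKernel a b (u, v) = beta a b * v ^ (2 * a + b - 2) := by
  rw [setIntegral_congr_fun measurableSet_Ioo fun u hu ↦ weightedRieszKernel_of_lt hu.2,
    ← integral_Ioc_eq_integral_Ioo, ← intervalIntegral.integral_of_le hv.le,
    intervalIntegral.integral_const_mul, integral_rpow_mul_sub_rpow ha hb hv, ← mul_assoc,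
    ← rpow_add hv, mul_comm]
  ring_nf

lemma integral_indicator_weightedRieszKernel (ha : 0 < a) (hb : 0 < b) (hv : v ∈ Ioc 0 t) :
    ∫ u in Ioc 0 t, {z | z.1 < z.2}.indicator (weightedRieszKernel a b) (u, v) =
      beta a b * v ^ (2 * a + b - 2) := by
  rw [← integral_Ioo_weightedRieszKernel ha hb hv.1, ← restrict_Ioc_restrict_Iio volume 0 hv.2,
    ← MeasureTheory.integral_indicator measurableSet_Iio]
  rfl

lemma integrableOn_triangle_weightedRieszKernel (ha : 0 < a) (hb : 0 < b) (hab : 1 < 2 * a + b)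
    (ht : 0 ≤ t) :
    IntegrableOn (weightedRieszKernel a b) {z | z.1 < z.2}
      ((volume.restrict (Ioc 0 t)).prod (volume.restrict (Ioc 0 t))) := by
  have htri : MeasurableSet {z : ℝ × ℝ | z.1 < z.2} :=
    measurableSet_lt measurable_fst measurable_snd
  rw [← integrable_indicator_iff htri]
  refine (integrable_prod_iff' ((measurable_weightedRieszKernel a b).indicator
    htri).aestronglyMeasurable).2 ⟨?_, ?_⟩
  · filter_upwards [ae_restrict_mem measurableSet_Ioc] with v hv
    have := integrableOn_Ioo_weightedRieszKernel ha hb hv.1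
    rw [IntegrableOn, ← restrict_Ioc_restrict_Iio volume 0 hv.2] at this
    exact (integrable_indicator_iff measurableSet_Iio).2 this
  · have hpow : IntegrableOn (fun v : ℝ ↦ beta a b * v ^ (2 * a + b - 2)) (Ioc 0 t) :=
      ((intervalIntegrable_iff_integrableOn_Ioc_of_le ht).1
        (intervalIntegrable_rpow' (by linarith))).const_mul _
    refine hpow.congr_fun (fun v hv ↦ ?_) measurableSet_Ioc
    beta_reduce
    rw [← integral_indicator_weightedRieszKernel ha hb hv]
    refine setIntegral_congr_fun measurableSet_Ioc fun u hu ↦ ?_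
    exact (norm_of_nonneg (indicator_apply_nonneg
      fun _ ↦ weightedRieszKernel_nonneg hu.1.le hv.1.le)).symm

lemma setIntegral_triangle_weightedRieszKernel (ha : 0 < a) (hb : 0 < b) (hab : 1 < 2 * a + b)
    (ht : 0 ≤ t) :
    ∫ z in {z | z.1 < z.2}, weightedRieszKernel a b z
        ∂(volume.restrict (Ioc 0 t)).prod (volume.restrict (Ioc 0 t)) =
      beta a b * t ^ (2 * a + b - 1) / (2 * a + b - 1) := by
  have htri : MeasurableSet {z : ℝ × ℝ | z.1 < z.2} :=
    measurableSet_lt measurable_fst measurable_snd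
  have hint := integrableOn_triangle_weightedRieszKernel ha hb hab ht
  rw [← MeasureTheory.integral_indicator htri,
    integral_prod_symm _ ((integrable_indicator_iff htri).2 hint),
    setIntegral_congr_fun measurableSet_Ioc
      fun v hv ↦ integral_indicator_weightedRieszKernel ha hb hv,
    ← intervalIntegral.integral_of_le ht, intervalIntegral.integral_const_mul,
    integral_rpow (.inl (by linarith))]
  have hexp : 2 * a + b - 2 + 1 = 2 * a + b - 1 := by ring
  rw [hexp, zero_rpow (by linarith), sub_zero, mul_div_assoc]

lemma integrable_weightedRieszKernel (ha : 0 < a) (hb : 0 < b) (hab : 1 < 2 * a + b)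
    (ht : 0 ≤ t) :
    Integrable (weightedRieszKernel a b)
      ((volume.restrict (Ioc 0 t)).prod (volume.restrict (Ioc 0 t))) :=
  integrable_prod_of_integrableOn_fst_lt_snd (weightedRieszKernel_swap a b)
    (integrableOn_triangle_weightedRieszKernel ha hb hab ht)

lemma integral_integral_weightedRieszKernel (ha : 0 < a) (hb : 0 < b) (hab : 1 < 2 * a + b)
    (ht : 0 ≤ t) :
    ∫ v in Ioc 0 t, ∫ u in Ioc 0 t, weightedRieszKernel a b (u, v) =
      2 * (beta a b * t ^ (2 * a + b - 1) / (2 * a + b - 1)) := by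
  rw [← integral_prod_symm _ (integrable_weightedRieszKernel ha hb hab ht),
    integral_prod_eq_two_nsmul_fst_lt_snd (weightedRieszKernel_swap a b)
      (integrableOn_triangle_weightedRieszKernel ha hb hab ht),
    setIntegral_triangle_weightedRieszKernel ha hb hab ht, nsmul_eq_mul, Nat.cast_ofNat]

lemma abs_integral_integral_mul_mul_abs_sub_rpow_le (ha : 0 < a) (hb : 0 < b)
    (hab : 1 < 2 * a + b) (ht : 0 ≤ t) {φ : ℝ → ℝ} {c : ℝ}
    (hφ : ∀ u ∈ Ioc 0 t, |φ u| ≤ c * u ^ (a - 1)) :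
    |∫ v in (0 : ℝ)..t, ∫ u in (0 : ℝ)..t, φ u * φ v * |u - v| ^ (b - 1)| ≤
      c ^ 2 * (2 * (beta a b * t ^ (2 * a + b - 1) / (2 * a + b - 1))) := by
  have hint := integrable_weightedRieszKernel ha hb hab ht
  simp only [intervalIntegral.integral_of_le ht]
  rw [← norm_eq_abs, ← integral_integral_weightedRieszKernel ha hb hab ht,
    ← MeasureTheory.integral_const_mul]
  refine MeasureTheory.norm_integral_le_of_norm_le (hint.integral_prod_right.const_mul _) ?_
  filter_upwards [hint.prod_left_ae, ae_restrict_mem measurableSet_Ioc] with v hv_int hv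
  rw [← MeasureTheory.integral_const_mul]
  refine MeasureTheory.norm_integral_le_of_norm_le (hv_int.const_mul _) ?_
  filter_upwards [ae_restrict_mem measurableSet_Ioc] with u hu
  calc ‖φ u * φ v * |u - v| ^ (b - 1)‖ = |φ u| * |φ v| * |u - v| ^ (b - 1) := by
        rw [norm_mul, norm_mul, norm_eq_abs, norm_eq_abs, norm_of_nonneg (by positivity)]
    _ ≤ c * u ^ (a - 1) * (c * v ^ (a - 1)) * |u - v| ^ (b - 1) := by
        have := (abs_nonneg _).trans (hφ u hu)
        gcongr
        exacts [hφ u hu, hφ v hv]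
    _ = c ^ 2 * weightedRieszKernel a b (u, v) := by
        rw [weightedRieszKernel]
        ring

end WeightedRieszKernel

lemma integral_integral_comp_sub_left {E : Type*} [NormedAddCommGroup E] [NormedSpace ℝ E]
    (g : ℝ → ℝ → E) (t : ℝ) :
    ∫ y in (0 : ℝ)..t, ∫ x in (0 : ℝ)..t, g (t - y) (t - x) =
      ∫ y in (0 : ℝ)..t, ∫ x in (0 : ℝ)..t, g y x := by
  simp only [fun y ↦ intervalIntegral.integral_comp_sub_left (a := 0) (b := t) (g y) t, sub_self,
    sub_zero]
  rw [intervalIntegral.integral_comp_sub_left (fun y ↦ ∫ x in (0 : ℝ)..t, g y x), sub_self,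
    sub_zero]

theorem double_integral_bound_general {α β H lam t : ℝ} (hα0 : 0 < α) (hα1 : α ≤ 1) (hαβ : α ≤ β)
    (hH : 1 / 2 < H) (hβH : 1 < β + H) (hlam : 0 ≤ lam) (ht : 0 ≤ t) :
    (∫ q in (0 : ℝ)..t, ∫ p in (0 : ℝ)..t,
        (t - p) ^ (β - 1) * mittagLeffler α β (-lam * (t - p) ^ α)
        * (t - q) ^ (β - 1) * mittagLeffler α β (-lam * (t - q) ^ α)
        * |p - q| ^ (2 * H - 2))
      ≤ (1 / Gamma β) ^ 2 * (2 * beta β (2 * H - 1) / (2 * β + 2 * H - 2))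
        * t ^ (2 * β + 2 * H - 2) := by
  set φ : ℝ → ℝ := fun u ↦ u ^ (β - 1) * mittagLeffler α β (-lam * u ^ α)
  have hφ : ∀ u ∈ Ioc 0 t, |φ u| ≤ 1 / Gamma β * u ^ (β - 1) := fun u hu ↦ by
    rw [abs_mul, abs_of_nonneg (rpow_nonneg hu.1.le _), mul_comm, neg_mul]
    exact mul_le_mul_of_nonneg_right
      (abs_mittagLeffler_neg_le hα0 hα1 hαβ (mul_nonneg hlam (rpow_nonneg hu.1.le _)))
      (rpow_nonneg hu.1.le _)
  have hreflect : (∫ q in (0 : ℝ)..t, ∫ p in (0 : ℝ)..t,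
      (t - p) ^ (β - 1) * mittagLeffler α β (-lam * (t - p) ^ α)
      * (t - q) ^ (β - 1) * mittagLeffler α β (-lam * (t - q) ^ α) * |p - q| ^ (2 * H - 2)) =
      ∫ v in (0 : ℝ)..t, ∫ u in (0 : ℝ)..t, φ u * φ v * |u - v| ^ (2 * H - 1 - 1) := by
    rw [← integral_integral_comp_sub_left fun v u ↦ φ u * φ v * |u - v| ^ (2 * H - 1 - 1)]
    congr! 4 with q p
    rw [sub_sub_sub_cancel_left, abs_sub_comm, sub_sub, one_add_one_eq_two]
    ring
  rw [hreflect]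
  refine (le_abs_self _).trans ((abs_integral_integral_mul_mul_abs_sub_rpow_le (hα0.trans_le hαβ)
    (by linarith) (by linarith) ht hφ).trans_eq ?_)
  have hexp : 2 * β + (2 * H - 1) - 1 = 2 * β + 2 * H - 2 := by ring
  rw [hexp]
  ring

theorem double_integral_bound (α H : ℝ) (hα0 : 0 < α) (hα1 : α ≤ 1)
    (hH0 : 1/2 < H) (hH1 : H < 1) (hαH : 1 < α + H) :
    ∃ C : ℝ, 0 < C ∧ ∀ lam t : ℝ, 0 < lam → 0 < t →
      (∫ q in (0:ℝ)..t, ∫ p in (0:ℝ)..t,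
          (t - p) ^ (α - 1) * mittagLeffler α α (-lam * (t - p) ^ α)
          * (t - q) ^ (α - 1) * mittagLeffler α α (-lam * (t - q) ^ α)
          * |p - q| ^ (2*H - 2))
        ≤ C * t ^ (2*α + 2*H - 2) := by
  have hbeta : 0 < beta α (2 * H - 1) := beta_pos hα0 (by linarith)
  have hden : 0 < 2 * α + 2 * H - 2 := by linarith
  exact ⟨_, by positivity, fun lam t hlam ht ↦
    double_integral_bound_general hα0 hα1 le_rfl hH0 hαH hlam.le ht.le⟩
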